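/- arXiv:1807.08672 — 2 statements merged into one kernel-verified Lean document; each statement's English description precedes it below -/
import Mathlib

section
/- For every z > 2, |P(W ≥ z) − P(W̄ > z)| ≤ 2 Σᵢ₌₁ⁿ P(|ξᵢ| > z/4) + 4 e² (1 + z)^{−2} (β₂ + β₃). -/
open MeasureTheory ProbabilityTheory Real

/-- The standard normal cumulative distribution function. -/
noncomputable def Phi (z : ℝ) : ℝ :=
  (Real.sqrt (2 * Real.pi))⁻¹ * ∫ u in Set.Iic z, Real.exp (-u ^ 2 / 2)

/-- The bounded solution `f_z` of the Stein equation
`f'(w) - w f(w) = 1{w ≤ z} - Φ(z)`. -/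
noncomputable def fz (z w : ℝ) : ℝ :=
  if w ≤ z then Real.sqrt (2 * Real.pi) * Real.exp (w ^ 2 / 2) * Phi w * (1 - Phi z)
  else Real.sqrt (2 * Real.pi) * Real.exp (w ^ 2 / 2) * Phi z * (1 - Phi w)

/-- The derivative `f_z'`, expressed via the Stein equation. -/
noncomputable def fz' (z w : ℝ) : ℝ :=
  w * fz z w + (if w ≤ z then 1 else 0) - Phi z

/-- The truncation `x̄ᵢ = ξᵢ 1{ξᵢ ≤ 1}`. -/
noncomputable def xbar {Ω : Type*} {n : ℕ} (ξ : Fin n → Ω → ℝ) (i : Fin n) (ω : Ω) : ℝ :=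
  if ξ i ω ≤ 1 then ξ i ω else 0

/-- `W̄ = ∑ᵢ x̄ᵢ`. -/
noncomputable def Wbar {Ω : Type*} {n : ℕ} (ξ : Fin n → Ω → ℝ) (ω : Ω) : ℝ :=
  ∑ i, xbar ξ i ω

/-- `W̄⁽ⁱ⁾ = W̄ - x̄ᵢ`. -/
noncomputable def Wbari {Ω : Type*} {n : ℕ} (ξ : Fin n → Ω → ℝ) (i : Fin n) (ω : Ω) : ℝ :=
  Wbar ξ ω - xbar ξ i ω

/-- `K̄ᵢ(t) = E[x̄ᵢ (1{0 ≤ t ≤ x̄ᵢ} - 1{x̄ᵢ ≤ t < 0})]`. -/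
noncomputable def Kbar {Ω : Type*} [MeasureSpace Ω] {n : ℕ} (ξ : Fin n → Ω → ℝ)
    (i : Fin n) (t : ℝ) : ℝ :=
  ∫ ω, xbar ξ i ω * ((if 0 ≤ t ∧ t ≤ xbar ξ i ω then (1 : ℝ) else 0)
    - (if xbar ξ i ω ≤ t ∧ t < 0 then (1 : ℝ) else 0))

/-- `β₂ = ∑ᵢ E[ξᵢ² 1{|ξᵢ| > 1}]`. -/
noncomputable def beta2 {Ω : Type*} [MeasureSpace Ω] {n : ℕ} (ξ : Fin n → Ω → ℝ) : ℝ :=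
  ∑ i, ∫ ω, (if 1 < |ξ i ω| then (ξ i ω) ^ 2 else 0)

/-- `β₃ = ∑ᵢ E[|ξᵢ|³ 1{|ξᵢ| ≤ 1}]`. -/
noncomputable def beta3 {Ω : Type*} [MeasureSpace Ω] {n : ℕ} (ξ : Fin n → Ω → ℝ) : ℝ :=
  ∑ i, ∫ ω, (if |ξ i ω| ≤ 1 then |ξ i ω| ^ 3 else 0)

/-!
Write `W = ∑ Xᵢ`, `W̄ = ∑ X̄ᵢ` with `X̄ᵢ = Xᵢ 1{Xᵢ ≤ 1}`, and `β = β₂ + β₃ = ∑ E[Xᵢ² (1 ∧ |Xᵢ|)]`.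
Since `W̄ ≤ W`, the two probabilities differ by at most the probability that `W̄ ≤ z ≤ W`,
and then either `W̄ = z` or some `Xᵢ` exceeds `1`.

If `Xᵢ > 1`, then either `|Xᵢ| > z / 4` or the sum of the other summands is at least `3 z / 4`;
by independence the second event costs `P(Xᵢ > 1) ≤ E[Xᵢ² (1 ∧ |Xᵢ|)]` times a Cantelli factor
of order `(1 + z)⁻²`.

The atom `W̄ = z` is controlled by a concentration inequality in the style of Chen and Shao.
With `g` a ramp of slope `1` around `z`, independence of `Xᵢ` from the remaining summands gives
`E[W g(W̄)] = ∑ E[Xᵢ (g(W̄) - g(W̄ - X̄ᵢ))] ≥ E[S 1{W̄ = z}]`, where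
`S = ∑ |X̄ᵢ| (|X̄ᵢ| ∧ δ)`. For `δ` of order `β` the mean of `S` is bounded below and its standard
deviation is at most `δ`, so `P(W̄ = z)` is of order `δ P(W̄ ≥ z - δ)^(1/2)`, and a Chernoff bound
for `W̄` supplies the decay in `z`.
-/

section Truncation

/-- The one-sided truncation `x 1{x ≤ c}` at level `c`; it is `0`, not `c`, above the level. -/
noncomputable def truncAbove (c x : ℝ) : ℝ := if x ≤ c then x else 0

variable {c x : ℝ}

lemma truncAbove_of_le (h : x ≤ c) : truncAbove c x = x := if_pos h

lemma truncAbove_eq_self_or_eq_zero (c x : ℝ) : truncAbove c x = x ∨ truncAbove c x = 0 := by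
  unfold truncAbove; split_ifs <;> simp

lemma measurable_truncAbove (c : ℝ) : Measurable (truncAbove c) :=
  Measurable.ite measurableSet_Iic measurable_id measurable_const

lemma truncAbove_le_self (hc : 0 ≤ c) (x : ℝ) : truncAbove c x ≤ x := by
  unfold truncAbove; split_ifs <;> linarith

lemma truncAbove_le_level (hc : 0 ≤ c) (x : ℝ) : truncAbove c x ≤ c := by
  unfold truncAbove; split_ifs <;> assumption

lemma abs_truncAbove_le (c x : ℝ) : |truncAbove c x| ≤ |x| := by
  rcases truncAbove_eq_self_or_eq_zero c x with h | h <;> simp [h]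

lemma mul_sub_comp_sub_truncAbove (g : ℝ → ℝ) (c w x : ℝ) :
    x * (g w - g (w - truncAbove c x)) = truncAbove c x * (g w - g (w - truncAbove c x)) := by
  rcases truncAbove_eq_self_or_eq_zero c x with h | h <;> simp [h]

lemma exp_le_one_add_add_sq (hx : x ≤ 1) : exp x ≤ 1 + x + x ^ 2 := by
  rcases le_total (-1) x with h | h
  · linarith [(abs_le.1 (abs_exp_sub_one_sub_id_le (abs_le.2 ⟨h, hx⟩))).2]
  · nlinarith [exp_le_one_iff.2 (show x ≤ 0 by linarith)]

lemma exp_mul_truncAbove_le {t : ℝ} (ht : 0 ≤ t) (hc : 0 ≤ c) (htc : t * c ≤ 1) (x : ℝ) :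
    exp (t * truncAbove c x) ≤ 1 + t * x + t ^ 2 * x ^ 2 := by
  have hlevel : t * truncAbove c x ≤ 1 :=
    (mul_le_mul_of_nonneg_left (truncAbove_le_level hc x) ht).trans htc
  calc exp (t * truncAbove c x)
      ≤ 1 + t * truncAbove c x + t ^ 2 * truncAbove c x ^ 2 := by
        simpa only [mul_pow] using exp_le_one_add_add_sq hlevel
    _ ≤ 1 + t * x + t ^ 2 * x ^ 2 := by
        gcongr 1 + t * ?_ + t ^ 2 * ?_
        · exact truncAbove_le_self hc x
        · exact sq_le_sq.2 (abs_truncAbove_le c x)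

lemma sum_truncAbove_eq_or_exists {ι : Type*} [Fintype ι] [DecidableEq ι] {y : ι → ℝ} {z : ℝ}
    (hsum : z ≤ ∑ i, y i) (htrunc : ∑ i, truncAbove c (y i) ≤ z) (r : ℝ) :
    ∑ i, truncAbove c (y i) = z ∨
      ∃ i, r < |y i| ∨ c < y i ∧ z - r ≤ ∑ j ∈ Finset.univ.erase i, y j := by
  by_cases hall : ∀ i, y i ≤ c
  · have heq : ∑ i, truncAbove c (y i) = ∑ i, y i :=
      Finset.sum_congr rfl fun i _ => truncAbove_of_le (hall i)
    exact Or.inl (le_antisymm htrunc (heq ▸ hsum))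
  · push Not at hall
    obtain ⟨i, hi⟩ := hall
    refine Or.inr ⟨i, (lt_or_ge r |y i|).imp_right fun hr => ⟨hi, ?_⟩⟩
    linarith [le_abs_self (y i), Finset.add_sum_erase Finset.univ y (Finset.mem_univ i)]

end Truncation

section Ramp

/-- The piecewise linear function that vanishes below `lo`, has slope `1` on `[lo, hi]` and is
constant above `hi`; it plays the role of the test function in Stein's method. -/
noncomputable def ramp (lo hi w : ℝ) : ℝ := max 0 (min (w - lo) (hi - lo))

/-- The function `|x| (|x| ∧ δ)`: a square whose growth is cut down to linear beyond `δ`. -/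
noncomputable def cutSq (δ x : ℝ) : ℝ := |x| * min |x| δ

variable {lo hi w δ : ℝ}

lemma monotone_ramp (lo hi : ℝ) : Monotone (ramp lo hi) := fun a b h => by
  unfold ramp; gcongr

lemma ramp_nonneg (lo hi w : ℝ) : 0 ≤ ramp lo hi w := le_max_left _ _

lemma ramp_le (h : lo ≤ hi) (w : ℝ) : ramp lo hi w ≤ hi - lo :=
  max_le (sub_nonneg.2 h) (min_le_right _ _)

lemma abs_ramp_le (h : lo ≤ hi) (w : ℝ) : |ramp lo hi w| ≤ hi - lo :=
  (abs_of_nonneg (ramp_nonneg lo hi w)).trans_le (ramp_le h w)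

lemma ramp_of_le (h : w ≤ lo) : ramp lo hi w = 0 :=
  max_eq_left ((min_le_left _ _).trans (sub_nonpos.2 h))

lemma ramp_of_mem_Icc (h : w ∈ Set.Icc lo hi) : ramp lo hi w = w - lo := by
  rw [ramp, min_eq_left (by linarith [h.2]), max_eq_right (sub_nonneg.2 h.1)]

lemma mul_ramp_le_indicator (h : lo ≤ hi) (w y : ℝ) :
    y * ramp lo hi w ≤ (Set.Ici lo).indicator (fun _ => (hi - lo) * |y|) w := by
  refine Set.le_indicator_apply (fun _ => ?_) fun hw => ?_
  · calc y * ramp lo hi w ≤ |y| * ramp lo hi w :=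
          mul_le_mul_of_nonneg_right (le_abs_self y) (ramp_nonneg lo hi w)
      _ ≤ |y| * (hi - lo) := mul_le_mul_of_nonneg_left (ramp_le h w) (abs_nonneg y)
      _ = (hi - lo) * |y| := mul_comm _ _
  · rw [ramp_of_le (not_le.1 hw).le, mul_zero]

lemma mul_ramp_sub_ramp_sub_nonneg (lo hi w x : ℝ) :
    0 ≤ x * (ramp lo hi w - ramp lo hi (w - x)) := by
  rcases le_total 0 x with hx | hx
  · exact mul_nonneg hx (sub_nonneg.2 (monotone_ramp lo hi (by linarith)))
  · exact mul_nonneg_of_nonpos_of_nonpos hx (sub_nonpos.2 (monotone_ramp lo hi (by linarith)))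

lemma cutSq_le_mul_ramp_sub_ramp_sub (hδ : 0 ≤ δ) (hw : w ∈ Set.Icc (lo + δ) (hi - δ)) (x : ℝ) :
    cutSq δ x ≤ x * (ramp lo hi w - ramp lo hi (w - x)) := by
  obtain ⟨hlo, hhi⟩ := hw
  rw [ramp_of_mem_Icc ⟨by linarith, by linarith⟩, cutSq]
  rcases le_total 0 x with hx | hx
  · rw [abs_of_nonneg hx]
    have hstep : ramp lo hi (w - x) ≤ w - lo - min x δ :=
      max_le (by linarith [min_le_right x δ])
        ((min_le_left _ _).trans (by linarith [min_le_left x δ]))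
    exact mul_le_mul_of_nonneg_left (by linarith) hx
  · rw [abs_of_nonpos hx]
    have hstep : w - lo + min (-x) δ ≤ ramp lo hi (w - x) :=
      le_max_of_le_right (le_min (by linarith [min_le_left (-x) δ])
        (by linarith [min_le_right (-x) δ]))
    linarith [mul_le_mul_of_nonneg_left hstep (neg_nonneg.2 hx)]

lemma cutSq_nonneg (hδ : 0 ≤ δ) (x : ℝ) : 0 ≤ cutSq δ x :=
  mul_nonneg (abs_nonneg _) (le_min (abs_nonneg _) hδ)

lemma cutSq_le (δ x : ℝ) : cutSq δ x ≤ δ * |x| := by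
  rw [cutSq, mul_comm δ]
  exact mul_le_mul_of_nonneg_left (min_le_right _ _) (abs_nonneg _)

lemma measurable_cutSq (δ : ℝ) : Measurable (cutSq δ) :=
  measurable_abs.mul (measurable_abs.min measurable_const)

lemma sq_sub_cube_le_cutSq (hδ : 0 < δ) (x : ℝ) : x ^ 2 - (4 * δ)⁻¹ * |x| ^ 3 ≤ cutSq δ x := by
  have hsplit : x ^ 2 - (4 * δ)⁻¹ * |x| ^ 3 = |x| * (|x| - |x| ^ 2 / (4 * δ)) := by
    rw [← sq_abs x]; field_simp
  rw [hsplit, cutSq]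
  gcongr
  refine le_min (by linarith [show 0 ≤ |x| ^ 2 / (4 * δ) by positivity]) ?_
  have hsquare : |x| ^ 2 / (4 * δ) - |x| + δ = (|x| - 2 * δ) ^ 2 / (4 * δ) := by field_simp; ring
  linarith [show 0 ≤ (|x| - 2 * δ) ^ 2 / (4 * δ) by positivity]

lemma sq_sub_le_cutSq_truncAbove {c : ℝ} (hδ : 0 < δ) (hδc : 4 * δ ≤ c) (x : ℝ) :
    x ^ 2 - (4 * δ)⁻¹ * (x ^ 2 * min c |x|) ≤ cutSq δ (truncAbove c x) := by
  rcases le_or_gt |x| c with hx | hx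
  · rw [truncAbove_of_le ((le_abs_self x).trans hx), min_eq_right hx, ← sq_abs x, ← pow_succ,
      sq_abs]
    exact sq_sub_cube_le_cutSq hδ x
  · have hfactor : 1 ≤ (4 * δ)⁻¹ * c := by
      rwa [inv_mul_eq_div, one_le_div (by positivity)]
    rw [min_eq_left hx.le]
    nlinarith [cutSq_nonneg hδ.le (truncAbove c x), sq_nonneg x]

lemma indicator_sum_cutSq_truncAbove_le {ι : Type*} [Fintype ι] (c : ℝ) {a b : ℝ} (hδ : 0 ≤ δ)
    (y : ι → ℝ) :
    {y | ∑ i, truncAbove c (y i) ∈ Set.Icc a b}.indicator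
        (fun y => ∑ i, cutSq δ (truncAbove c (y i))) y ≤
      ∑ i, y i * (ramp (a - δ) (b + δ) (∑ j, truncAbove c (y j)) -
        ramp (a - δ) (b + δ) (∑ j, truncAbove c (y j) - truncAbove c (y i))) := by
  simp only [mul_sub_comp_sub_truncAbove (ramp (a - δ) (b + δ))]
  refine Set.indicator_apply_le' (fun hy => ?_) fun _ => ?_
  · refine Finset.sum_le_sum fun i _ => cutSq_le_mul_ramp_sub_ramp_sub hδ ?_ _
    simpa using hy
  · exact Finset.sum_nonneg fun i _ => mul_ramp_sub_ramp_sub_nonneg _ _ _ _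

end Ramp

section Probability

variable {Ω ι : Type*} {mΩ : MeasurableSpace Ω} {μ : Measure Ω} {X : ι → Ω → ℝ}

lemma indepFun_sum_comp_of_notMem (hindep : iIndepFun X μ) (hX : ∀ i, AEMeasurable (X i) μ)
    {φ : ℝ → ℝ} (hφ : Measurable φ) {s : Finset ι} {i : ι} (hi : i ∉ s) :
    IndepFun (X i) (fun ω => ∑ j ∈ s, φ (X j ω)) μ := by
  classical
  let ψ : ι → ℝ → ℝ := fun j => if j = i then id else φ
  have hψ : ∀ j, Measurable (ψ j) := fun j => by
    by_cases h : j = i <;> simp only [ψ, h, if_true, if_false, measurable_id, hφ]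
  have hsum : ∑ j ∈ s, ψ j ∘ X j = fun ω => ∑ j ∈ s, φ (X j ω) := by
    ext ω
    rw [Finset.sum_apply]
    exact Finset.sum_congr rfl fun j hj => by simp [ψ, ne_of_mem_of_not_mem hj hi]
  have h := (hindep.comp ψ hψ).indepFun_finsetSum_of_notMem₀
    (fun j => (hψ j).comp_aemeasurable (hX j)) hi
  rw [hsum] at h
  simpa [ψ] using h.symm

lemma integral_sq_sum (hindep : iIndepFun X μ) (hL2 : ∀ i, MemLp (X i) 2 μ)
    (hmean : ∀ i, ∫ ω, X i ω ∂μ = 0) (s : Finset ι) :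
    ∫ ω, (∑ i ∈ s, X i ω) ^ 2 ∂μ = ∑ i ∈ s, ∫ ω, X i ω ^ 2 ∂μ := by
  have := hindep.isProbabilityMeasure
  have hmean_sum : ∫ ω, (∑ i ∈ s, X i) ω ∂μ = 0 := by
    simp only [Finset.sum_apply]
    rw [integral_finsetSum _ fun i _ => (hL2 i).integrable one_le_two]
    simp [hmean]
  have h := IndepFun.variance_sum (s := s) (fun i _ => hL2 i)
    (fun i _ j _ hij => hindep.indepFun hij)
  rw [variance_of_integral_eq_zero
    (Finset.aemeasurable_sum _ fun i _ => (hL2 i).aemeasurable) hmean_sum] at h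
  simpa only [Finset.sum_apply,
    fun i => variance_of_integral_eq_zero (hL2 i).aemeasurable (hmean i)] using h

/-- **Cantelli's inequality**. It is Markov's inequality for `(v + t Y) ^ 2`. -/
lemma measureReal_ge_le_div_add_sq [IsProbabilityMeasure μ] {Y : Ω → ℝ} {v t : ℝ}
    (hY : MemLp Y 2 μ) (hmean : ∫ ω, Y ω ∂μ = 0) (hvar : ∫ ω, Y ω ^ 2 ∂μ ≤ v) (hv : 0 < v)
    (ht : 0 ≤ t) : μ.real {ω | t ≤ Y ω} ≤ v / (v + t ^ 2) := by
  have hint : Integrable Y μ := hY.integrable one_le_two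
  have hmoment : ∫ ω, (v + t * Y ω) ^ 2 ∂μ ≤ v * (v + t ^ 2) :=
    calc ∫ ω, (v + t * Y ω) ^ 2 ∂μ
        = ∫ ω, (v ^ 2 + 2 * v * t * Y ω + t ^ 2 * Y ω ^ 2) ∂μ := by congr! 2; ring
      _ = v ^ 2 + t ^ 2 * ∫ ω, Y ω ^ 2 ∂μ := by
        rw [integral_add (by fun_prop) (hY.integrable_sq.const_mul _),
          integral_add (by fun_prop) (by fun_prop), integral_const_mul, integral_const_mul, hmean]
        simp
      _ ≤ v * (v + t ^ 2) := by nlinarith [mul_le_mul_of_nonneg_left hvar (sq_nonneg t)]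
  have hmarkov := mul_meas_ge_le_integral_of_nonneg
    (Filter.Eventually.of_forall fun ω => sq_nonneg (v + t * Y ω))
    (((memLp_const v).add (hY.const_mul t)).integrable_sq) ((v + t ^ 2) ^ 2)
  have hsub : μ.real {ω | t ≤ Y ω} ≤ μ.real {ω | (v + t ^ 2) ^ 2 ≤ (v + t * Y ω) ^ 2} :=
    measureReal_mono fun ω (hω : t ≤ Y ω) =>
      pow_le_pow_left₀ (show 0 ≤ v + t ^ 2 by positivity)
        (by linarith [mul_le_mul_of_nonneg_left hω ht, sq t]) 2
  rw [le_div_iff₀ (by positivity)]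
  refine le_of_mul_le_mul_right ?_ (show 0 < v + t ^ 2 by positivity)
  calc μ.real {ω | t ≤ Y ω} * (v + t ^ 2) * (v + t ^ 2)
      ≤ (v + t ^ 2) ^ 2 * μ.real {ω | (v + t ^ 2) ^ 2 ≤ (v + t * Y ω) ^ 2} := by
        nlinarith [mul_le_mul_of_nonneg_left hsub (sq_nonneg (v + t ^ 2))]
    _ ≤ v * (v + t ^ 2) := hmarkov.trans hmoment

lemma measureReal_sum_ge_le_div_add_sq (hindep : iIndepFun X μ)
    (hL2 : ∀ i, MemLp (X i) 2 μ) (hmean : ∀ i, ∫ ω, X i ω ∂μ = 0) {s : Finset ι} {v t : ℝ}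
    (hvar : ∑ i ∈ s, ∫ ω, X i ω ^ 2 ∂μ ≤ v) (hv : 0 < v) (ht : 0 ≤ t) :
    μ.real {ω | t ≤ ∑ i ∈ s, X i ω} ≤ v / (v + t ^ 2) := by
  have := hindep.isProbabilityMeasure
  refine measureReal_ge_le_div_add_sq (memLp_finsetSum _ fun i _ => hL2 i) ?_
    ((integral_sq_sum hindep hL2 hmean s).trans_le hvar) hv ht
  rw [integral_finsetSum _ fun i _ => (hL2 i).integrable one_le_two]
  exact Finset.sum_eq_zero fun i _ => hmean i

lemma memLp_truncAbove {Y : Ω → ℝ} {p : ENNReal} (hY : MemLp Y p μ) (c : ℝ) :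
    MemLp (fun ω => truncAbove c (Y ω)) p μ :=
  hY.mono ((measurable_truncAbove c).comp_aemeasurable hY.aemeasurable).aestronglyMeasurable
    (Filter.Eventually.of_forall fun ω => abs_truncAbove_le c (Y ω))

lemma integrable_exp_mul_of_le [IsFiniteMeasure μ] {Y : Ω → ℝ} {t C : ℝ} (hY : AEMeasurable Y μ)
    (ht : 0 ≤ t) (hC : ∀ ω, Y ω ≤ C) : Integrable (fun ω => exp (t * Y ω)) μ := by
  refine Integrable.of_bound (by fun_prop) (exp (t * C)) (Filter.Eventually.of_forall fun ω => ?_)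
  rw [norm_of_nonneg (exp_pos _).le]
  gcongr
  exact hC ω

lemma mgf_truncAbove_le [IsProbabilityMeasure μ] {Y : Ω → ℝ} {c t : ℝ} (hY : MemLp Y 2 μ)
    (hmean : ∫ ω, Y ω ∂μ = 0) (ht : 0 ≤ t) (hc : 0 ≤ c) (htc : t * c ≤ 1) :
    mgf (fun ω => truncAbove c (Y ω)) μ t ≤ exp (t ^ 2 * ∫ ω, Y ω ^ 2 ∂μ) := by
  have hint : Integrable Y μ := hY.integrable one_le_two
  have hsq := hY.integrable_sq
  calc mgf (fun ω => truncAbove c (Y ω)) μ t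
      ≤ ∫ ω, (1 + t * Y ω + t ^ 2 * Y ω ^ 2) ∂μ :=
        integral_mono (integrable_exp_mul_of_le (memLp_truncAbove hY c).aemeasurable ht
          fun ω => truncAbove_le_level hc (Y ω)) (by fun_prop)
          fun ω => exp_mul_truncAbove_le ht hc htc (Y ω)
    _ = t ^ 2 * ∫ ω, Y ω ^ 2 ∂μ + 1 := by
        rw [integral_add (by fun_prop) (by fun_prop), integral_add (by fun_prop) (by fun_prop),
          integral_const_mul, integral_const_mul, hmean]
        simp [add_comm]
    _ ≤ exp (t ^ 2 * ∫ ω, Y ω ^ 2 ∂μ) := add_one_le_exp _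

lemma measureReal_sum_truncAbove_ge_le [Fintype ι] (hindep : iIndepFun X μ)
    (hL2 : ∀ i, MemLp (X i) 2 μ) (hmean : ∀ i, ∫ ω, X i ω ∂μ = 0) {c t : ℝ} (ht : 0 ≤ t)
    (hc : 0 ≤ c) (htc : t * c ≤ 1) (a : ℝ) :
    μ.real {ω | a ≤ ∑ i, truncAbove c (X i ω)} ≤
      exp (t ^ 2 * (∑ i, ∫ ω, X i ω ^ 2 ∂μ) - t * a) := by
  have := hindep.isProbabilityMeasure
  have hmeas : ∀ i, AEMeasurable (fun ω => truncAbove c (X i ω)) μ := fun i =>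
    (memLp_truncAbove (hL2 i) c).aemeasurable
  have hindep_trunc : iIndepFun (fun i ω => truncAbove c (X i ω)) μ :=
    hindep.comp _ fun _ => measurable_truncAbove c
  have hmgf : mgf (∑ i, fun ω => truncAbove c (X i ω)) μ t ≤
      exp (t ^ 2 * ∑ i, ∫ ω, X i ω ^ 2 ∂μ) := by
    rw [hindep_trunc.mgf_sum₀ hmeas, Finset.mul_sum, exp_sum]
    exact Finset.prod_le_prod (fun i _ => mgf_nonneg)
      fun i _ => mgf_truncAbove_le (hL2 i) (hmean i) ht hc htc
  have hchernoff := measure_ge_le_exp_mul_mgf a ht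
    (integrable_exp_mul_of_le (C := ∑ _i : ι, c) (Finset.aemeasurable_sum _ fun i _ => hmeas i) ht
      fun ω => (Finset.sum_apply ω _ _).trans_le
        (Finset.sum_le_sum fun i _ => truncAbove_le_level hc (X i ω)))
  simp only [Finset.sum_apply] at hchernoff
  calc μ.real {ω | a ≤ ∑ i, truncAbove c (X i ω)}
      ≤ exp (-t * a) * exp (t ^ 2 * ∑ i, ∫ ω, X i ω ^ 2 ∂μ) :=
        hchernoff.trans (mul_le_mul_of_nonneg_left hmgf (exp_pos _).le)
    _ = exp (t ^ 2 * (∑ i, ∫ ω, X i ω ^ 2 ∂μ) - t * a) := by rw [← exp_add]; ring_nf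

lemma setIntegral_abs_le_sqrt_mul_sqrt [IsFiniteMeasure μ] {Y : Ω → ℝ} (hY : MemLp Y 2 μ)
    (s : Set Ω) : ∫ ω in s, |Y ω| ∂μ ≤ √(∫ ω, Y ω ^ 2 ∂μ) * √(μ.real s) := by
  have hholder := integral_mul_norm_le_Lp_mul_Lq (μ := μ.restrict s) HolderConjugate.two_two
    (f := Y) (g := fun _ => (1 : ℝ)) (by simpa using hY.restrict s) (memLp_const 1)
  simp only [norm_eq_abs, abs_one, rpow_two, one_pow, mul_one, sq_abs, ← sqrt_eq_rpow,
    integral_const, measureReal_restrict_apply_univ, smul_eq_mul] at hholder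
  refine hholder.trans ?_
  gcongr ?_ * _
  exact sqrt_le_sqrt (setIntegral_le_integral hY.integrable_sq
    (Filter.Eventually.of_forall fun ω => sq_nonneg _))

lemma integrable_mul_comp_of_bounded {Y V : Ω → ℝ} {g : ℝ → ℝ} (hY : Integrable Y μ)
    (hV : AEMeasurable V μ) (hg : Measurable g) {C : ℝ} (hgC : ∀ w, |g w| ≤ C) :
    Integrable (fun ω => Y ω * g (V ω)) μ :=
  hY.mul_bdd (hg.comp_aemeasurable hV).aestronglyMeasurable
    (Filter.Eventually.of_forall fun ω => hgC (V ω))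

lemma integral_sum_mul_comp_sum_eq [Fintype ι] (hindep : iIndepFun X μ)
    (hint : ∀ i, Integrable (X i) μ) (hmean : ∀ i, ∫ ω, X i ω ∂μ = 0) {φ g : ℝ → ℝ}
    (hφ : Measurable φ) (hg : Measurable g) {C : ℝ} (hgC : ∀ w, |g w| ≤ C) :
    ∫ ω, (∑ i, X i ω) * g (∑ j, φ (X j ω)) ∂μ =
      ∫ ω, ∑ i, X i ω * (g (∑ j, φ (X j ω)) - g (∑ j, φ (X j ω) - φ (X i ω))) ∂μ := by
  classical
  have hmeas : ∀ i, AEMeasurable (X i) μ := fun i => (hint i).aemeasurable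
  have hsum : AEMeasurable (fun ω => ∑ j, φ (X j ω)) μ := by fun_prop
  have hrest : ∀ i, AEMeasurable (fun ω => ∑ j, φ (X j ω) - φ (X i ω)) μ := fun i => by fun_prop
  have hrest_int : ∀ i, Integrable (fun ω => X i ω * g (∑ j, φ (X j ω) - φ (X i ω))) μ := fun i =>
    integrable_mul_comp_of_bounded (hint i) (hrest i) hg hgC
  have hzero : ∀ i, ∫ ω, X i ω * g (∑ j, φ (X j ω) - φ (X i ω)) ∂μ = 0 := fun i => by
    have hind : IndepFun (X i) (fun ω => ∑ j, φ (X j ω) - φ (X i ω)) μ := by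
      simpa only [← Finset.sum_erase_eq_sub (Finset.mem_univ i)]
        using indepFun_sum_comp_of_notMem hindep hmeas hφ (Finset.notMem_erase i _)
    simpa [hmean i] using (hind.comp measurable_id hg).integral_fun_mul_eq_mul_integral
      (hmeas i).aestronglyMeasurable (hg.comp_aemeasurable (hrest i)).aestronglyMeasurable
  simp only [mul_sub, Finset.sum_sub_distrib, ← Finset.sum_mul]
  rw [integral_sub (integrable_mul_comp_of_bounded (integrable_finsetSum _ fun i _ => hint i)
      hsum hg hgC) (integrable_finsetSum _ fun i _ => hrest_int i),
    integral_finsetSum _ fun i _ => hrest_int i, Finset.sum_eq_zero fun i _ => hzero i, sub_zero]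

lemma memLp_cutSq_truncAbove {Y : Ω → ℝ} {p : ENNReal} (hY : MemLp Y p μ) {δ : ℝ} (hδ : 0 ≤ δ)
    (c : ℝ) : MemLp (fun ω => cutSq δ (truncAbove c (Y ω))) p μ := by
  refine ((memLp_truncAbove hY c).abs.const_mul δ).mono'
    ((measurable_cutSq δ).comp_aemeasurable
      (memLp_truncAbove hY c).aemeasurable).aestronglyMeasurable
    (Filter.Eventually.of_forall fun ω => ?_)
  rw [norm_of_nonneg (cutSq_nonneg hδ _)]
  exact cutSq_le δ _

lemma integral_mul_ramp_le {Y V : Ω → ℝ} (hY : Integrable Y μ) (hV : AEMeasurable V μ)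
    {lo hi : ℝ} (h : lo ≤ hi) :
    ∫ ω, Y ω * ramp lo hi (V ω) ∂μ ≤ (hi - lo) * ∫ ω in {ω | lo ≤ V ω}, |Y ω| ∂μ := by
  have hset : NullMeasurableSet {ω | lo ≤ V ω} μ := hV.nullMeasurableSet_preimage measurableSet_Ici
  rw [← integral_const_mul, ← integral_indicator₀ hset]
  exact integral_mono
    (integrable_mul_comp_of_bounded hY hV (monotone_ramp _ _).measurable (abs_ramp_le h))
    ((hY.abs.const_mul _).indicator₀ hset) fun ω => mul_ramp_le_indicator h (V ω) (Y ω)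

lemma setIntegral_sum_cutSq_truncAbove_le [Fintype ι] (hindep : iIndepFun X μ)
    (hint : ∀ i, Integrable (X i) μ) (hmean : ∀ i, ∫ ω, X i ω ∂μ = 0) (c : ℝ) {a b δ : ℝ}
    (hab : a ≤ b) (hδ : 0 ≤ δ) :
    ∫ ω in {ω | ∑ i, truncAbove c (X i ω) ∈ Set.Icc a b},
        ∑ i, cutSq δ (truncAbove c (X i ω)) ∂μ ≤
      (b - a + 2 * δ) * ∫ ω in {ω | a - δ ≤ ∑ i, truncAbove c (X i ω)}, |∑ i, X i ω| ∂μ := by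
  have hlohi : a - δ ≤ b + δ := by linarith
  set g : ℝ → ℝ := ramp (a - δ) (b + δ)
  set T : Ω → ℝ := fun ω => ∑ i, truncAbove c (X i ω)
  have hg : Measurable g := (monotone_ramp _ _).measurable
  have htrunc : ∀ i, AEMeasurable (fun ω => truncAbove c (X i ω)) μ := fun i =>
    (measurable_truncAbove c).comp_aemeasurable (hint i).aemeasurable
  have hT : AEMeasurable T μ := by fun_prop
  have hS : Integrable (fun ω => ∑ i, cutSq δ (truncAbove c (X i ω))) μ :=
    integrable_finsetSum _ fun i _ =>
      memLp_one_iff_integrable.1 (memLp_cutSq_truncAbove (memLp_one_iff_integrable.2 (hint i)) hδ c)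
  have hB : NullMeasurableSet {ω | T ω ∈ Set.Icc a b} μ :=
    hT.nullMeasurableSet_preimage measurableSet_Icc
  calc ∫ ω in {ω | T ω ∈ Set.Icc a b}, ∑ i, cutSq δ (truncAbove c (X i ω)) ∂μ
      = ∫ ω, {ω | T ω ∈ Set.Icc a b}.indicator
          (fun ω => ∑ i, cutSq δ (truncAbove c (X i ω))) ω ∂μ := (integral_indicator₀ hB).symm
    _ ≤ ∫ ω, ∑ i, X i ω * (g (T ω) - g (T ω - truncAbove c (X i ω))) ∂μ := by
        refine integral_mono (hS.indicator₀ hB) (integrable_finsetSum _ fun i _ => ?_)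
          fun ω => indicator_sum_cutSq_truncAbove_le c hδ (X · ω)
        simp only [mul_sub]
        exact (integrable_mul_comp_of_bounded (hint i) hT hg (abs_ramp_le hlohi)).sub
          (integrable_mul_comp_of_bounded (hint i) (hT.sub (htrunc i)) hg (abs_ramp_le hlohi))
    _ = ∫ ω, (∑ i, X i ω) * g (T ω) ∂μ :=
        (integral_sum_mul_comp_sum_eq hindep hint hmean (measurable_truncAbove c) hg
          (abs_ramp_le hlohi)).symm
    _ ≤ (b + δ - (a - δ)) * ∫ ω in {ω | a - δ ≤ T ω}, |∑ i, X i ω| ∂μ :=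
        integral_mul_ramp_le (integrable_finsetSum _ fun i _ => hint i) hT hlohi
    _ = (b - a + 2 * δ) * ∫ ω in {ω | a - δ ≤ T ω}, |∑ i, X i ω| ∂μ := by ring

lemma integrable_comp_of_abs_le_mul_sq {Y : Ω → ℝ} {φ : ℝ → ℝ} {C : ℝ} (hY : MemLp Y 2 μ)
    (hφ : Measurable φ) (hbound : ∀ x, |φ x| ≤ C * x ^ 2) : Integrable (fun ω => φ (Y ω)) μ :=
  (hY.integrable_sq.const_mul C).mono' (hφ.comp_aemeasurable hY.aemeasurable).aestronglyMeasurable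
    (Filter.Eventually.of_forall fun ω => hbound (Y ω))

lemma integrable_sq_mul_min {Y : Ω → ℝ} (hY : MemLp Y 2 μ) {c : ℝ} (hc : 0 ≤ c) :
    Integrable (fun ω => Y ω ^ 2 * min c |Y ω|) μ := by
  refine integrable_comp_of_abs_le_mul_sq (C := c) (φ := fun x => x ^ 2 * min c |x|) hY
    (by fun_prop) fun x => ?_
  rw [abs_of_nonneg (mul_nonneg (sq_nonneg x) (le_min hc (abs_nonneg x))), mul_comm]
  exact mul_le_mul_of_nonneg_right (min_le_left _ _) (sq_nonneg x)

lemma le_integral_sum_cutSq_truncAbove [Fintype ι] [IsFiniteMeasure μ]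
    (hL2 : ∀ i, MemLp (X i) 2 μ) {c δ : ℝ} (hδ : 0 < δ) (hδc : 4 * δ ≤ c) :
    ∑ i, ∫ ω, X i ω ^ 2 ∂μ - (4 * δ)⁻¹ * ∑ i, ∫ ω, X i ω ^ 2 * min c |X i ω| ∂μ ≤
      ∫ ω, ∑ i, cutSq δ (truncAbove c (X i ω)) ∂μ := by
  have hcut : ∀ i, Integrable (fun ω => cutSq δ (truncAbove c (X i ω))) μ := fun i =>
    (memLp_cutSq_truncAbove (hL2 i) hδ.le c).integrable one_le_two
  have hmin : ∀ i, Integrable (fun ω => (4 * δ)⁻¹ * (X i ω ^ 2 * min c |X i ω|)) μ := fun i =>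
    (integrable_sq_mul_min (hL2 i) (by linarith)).const_mul _
  rw [integral_finsetSum _ fun i _ => hcut i, Finset.mul_sum, ← Finset.sum_sub_distrib]
  refine Finset.sum_le_sum fun i _ => ?_
  rw [← integral_const_mul, ← integral_sub (hL2 i).integrable_sq (hmin i)]
  exact integral_mono ((hL2 i).integrable_sq.sub (hmin i)) (hcut i)
    fun ω => sq_sub_le_cutSq_truncAbove hδ hδc (X i ω)

lemma variance_sum_cutSq_truncAbove_le [Fintype ι] (hindep : iIndepFun X μ)
    (hL2 : ∀ i, MemLp (X i) 2 μ) (c : ℝ) {δ : ℝ} (hδ : 0 ≤ δ) :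
    Var[fun ω => ∑ i, cutSq δ (truncAbove c (X i ω)); μ] ≤
      δ ^ 2 * ∑ i, ∫ ω, X i ω ^ 2 ∂μ := by
  have := hindep.isProbabilityMeasure
  have hmeas : Measurable fun x => cutSq δ (truncAbove c x) :=
    (measurable_cutSq δ).comp (measurable_truncAbove c)
  have hcut : ∀ i, MemLp (fun ω => cutSq δ (truncAbove c (X i ω))) 2 μ := fun i =>
    memLp_cutSq_truncAbove (hL2 i) hδ c
  have hpointwise : ∀ x : ℝ, cutSq δ (truncAbove c x) ^ 2 ≤ δ ^ 2 * x ^ 2 := fun x => by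
    rw [← sq_abs x, ← mul_pow]
    exact pow_le_pow_left₀ (cutSq_nonneg hδ _)
      ((cutSq_le δ _).trans (mul_le_mul_of_nonneg_left (abs_truncAbove_le c x) hδ)) 2
  have hsum : (fun ω => ∑ i, cutSq δ (truncAbove c (X i ω))) =
      ∑ i, fun ω => cutSq δ (truncAbove c (X i ω)) := by ext ω; simp
  rw [hsum, IndepFun.variance_sum (fun i _ => hcut i)
    fun i _ j _ hij => (hindep.indepFun hij).comp hmeas hmeas, Finset.mul_sum]
  refine Finset.sum_le_sum fun i _ => ?_
  calc Var[fun ω => cutSq δ (truncAbove c (X i ω)); μ]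
      ≤ ∫ ω, cutSq δ (truncAbove c (X i ω)) ^ 2 ∂μ :=
        variance_le_expectation_sq (hcut i).aestronglyMeasurable
    _ ≤ ∫ ω, δ ^ 2 * X i ω ^ 2 ∂μ :=
        integral_mono (hcut i).integrable_sq ((hL2 i).integrable_sq.const_mul _)
          fun ω => hpointwise (X i ω)
    _ = δ ^ 2 * ∫ ω, X i ω ^ 2 ∂μ := integral_const_mul _ _

lemma setIntegral_abs_sum_cutSq_truncAbove_sub_le [Fintype ι] (hindep : iIndepFun X μ)
    (hL2 : ∀ i, MemLp (X i) 2 μ) (c : ℝ) {δ : ℝ} (hδ : 0 ≤ δ) (s : Set Ω) :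
    ∫ ω in s, |∑ i, cutSq δ (truncAbove c (X i ω)) -
        ∫ ω', ∑ i, cutSq δ (truncAbove c (X i ω')) ∂μ| ∂μ ≤
      δ * (√(∑ i, ∫ ω, X i ω ^ 2 ∂μ) * √(μ.real s)) := by
  have := hindep.isProbabilityMeasure
  have hS : MemLp (fun ω => ∑ i, cutSq δ (truncAbove c (X i ω))) 2 μ :=
    memLp_finsetSum _ fun i _ => memLp_cutSq_truncAbove (hL2 i) hδ c
  refine (setIntegral_abs_le_sqrt_mul_sqrt (hS.sub (memLp_const _)) s).trans ?_
  simp only [Pi.sub_apply]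
  rw [← variance_eq_integral hS.aemeasurable, ← mul_assoc]
  gcongr
  rw [← sqrt_sq hδ, ← sqrt_mul (sq_nonneg δ), sqrt_sq hδ]
  exact sqrt_le_sqrt (variance_sum_cutSq_truncAbove_le hindep hL2 c hδ)

lemma sub_mul_measureReal_sum_truncAbove_mem_Icc_le [Fintype ι] (hindep : iIndepFun X μ)
    (hL2 : ∀ i, MemLp (X i) 2 μ) (hmean : ∀ i, ∫ ω, X i ω ∂μ = 0) {a b c δ : ℝ} (hab : a ≤ b)
    (hδ : 0 < δ) (hδc : 4 * δ ≤ c) :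
    (∑ i, ∫ ω, X i ω ^ 2 ∂μ - (4 * δ)⁻¹ * ∑ i, ∫ ω, X i ω ^ 2 * min c |X i ω| ∂μ) *
        μ.real {ω | ∑ i, truncAbove c (X i ω) ∈ Set.Icc a b} ≤
      (b - a + 3 * δ) * (√(∑ i, ∫ ω, X i ω ^ 2 ∂μ) *
        √(μ.real {ω | a - δ ≤ ∑ i, truncAbove c (X i ω)})) := by
  have := hindep.isProbabilityMeasure
  set v := ∑ i, ∫ ω, X i ω ^ 2 ∂μ
  set S : Ω → ℝ := fun ω => ∑ i, cutSq δ (truncAbove c (X i ω))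
  set A := {ω | a - δ ≤ ∑ i, truncAbove c (X i ω)}
  set B := {ω | ∑ i, truncAbove c (X i ω) ∈ Set.Icc a b}
  have hBA : B ⊆ A := fun ω hω => (sub_le_self a hδ.le).trans hω.1
  have hS : MemLp S 2 μ := memLp_finsetSum _ fun i _ => memLp_cutSq_truncAbove (hL2 i) hδ.le c
  have hsum : ∫ ω in A, |∑ i, X i ω| ∂μ ≤ √v * √(μ.real A) := by
    simpa only [integral_sq_sum hindep hL2 hmean] using
      setIntegral_abs_le_sqrt_mul_sqrt (memLp_finsetSum Finset.univ fun i _ => hL2 i) A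
  have hfluct : ∫ ω in B, |S ω - ∫ ω, S ω ∂μ| ∂μ ≤ δ * (√v * √(μ.real A)) :=
    (setIntegral_abs_sum_cutSq_truncAbove_sub_le hindep hL2 c hδ.le B).trans (by
      gcongr; exact measure_ne_top μ A)
  calc (v - (4 * δ)⁻¹ * ∑ i, ∫ ω, X i ω ^ 2 * min c |X i ω| ∂μ) * μ.real B
      ≤ (∫ ω, S ω ∂μ) * μ.real B := by
        gcongr; exact le_integral_sum_cutSq_truncAbove hL2 hδ hδc
    _ = ∫ ω in B, S ω ∂μ - ∫ ω in B, (S ω - ∫ ω, S ω ∂μ) ∂μ := by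
        rw [integral_sub (hS.integrable one_le_two).integrableOn integrableOn_const,
          setIntegral_const, smul_eq_mul]
        ring
    _ ≤ (b - a + 2 * δ) * (√v * √(μ.real A)) + δ * (√v * √(μ.real A)) := by
        have hstein := setIntegral_sum_cutSq_truncAbove_le hindep
          (fun i => (hL2 i).integrable one_le_two) hmean c hab hδ.le
        have hwidth := mul_le_mul_of_nonneg_left hsum (show 0 ≤ b - a + 2 * δ by linarith)
        have habs := (abs_le.1 (abs_integral_le_integral_abs (μ := μ.restrict B)
          (f := fun ω => S ω - ∫ ω, S ω ∂μ))).1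
        linarith
    _ = (b - a + 3 * δ) * (√v * √(μ.real A)) := by ring

lemma integral_sq_mul_min_pos {Y : Ω → ℝ} (hY : MemLp Y 2 μ) {c : ℝ} (hc : 0 < c)
    (hpos : 0 < ∫ ω, Y ω ^ 2 ∂μ) : 0 < ∫ ω, Y ω ^ 2 * min c |Y ω| ∂μ := by
  rw [integral_pos_iff_support_of_nonneg (fun ω => sq_nonneg (Y ω)) hY.integrable_sq] at hpos
  rw [integral_pos_iff_support_of_nonneg
    (fun ω => mul_nonneg (sq_nonneg (Y ω)) (le_min hc.le (abs_nonneg _)))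
    (integrable_sq_mul_min hY hc.le)]
  refine hpos.trans_le (measure_mono fun ω hω => ?_)
  have hne : Y ω ≠ 0 := pow_ne_zero_iff two_ne_zero |>.1 hω
  exact (mul_pos (sq_pos_iff.2 hne) (lt_min hc (abs_pos.2 hne))).ne'

lemma sum_integral_sq_mul_min_pos [Fintype ι] (hL2 : ∀ i, MemLp (X i) 2 μ) {c : ℝ} (hc : 0 < c)
    (hpos : 0 < ∑ i, ∫ ω, X i ω ^ 2 ∂μ) : 0 < ∑ i, ∫ ω, X i ω ^ 2 * min c |X i ω| ∂μ := by
  obtain ⟨i, hi, hposi⟩ := Finset.exists_lt_of_sum_lt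
    (show ∑ _i : ι, (0 : ℝ) < ∑ i, ∫ ω, X i ω ^ 2 ∂μ by simpa using hpos)
  refine Finset.sum_pos' (fun j _ => integral_nonneg fun ω => ?_)
    ⟨i, hi, integral_sq_mul_min_pos (hL2 i) hc hposi⟩
  exact mul_nonneg (sq_nonneg _) (le_min hc.le (abs_nonneg _))

lemma one_add_sq_le_exp {z : ℝ} (hz : -1 ≤ z) : (1 + z) ^ 2 ≤ 16 * exp ((z - 3) / 2) := by
  have htangent : 1 + z ≤ 4 * exp ((z - 3) / 4) := by linarith [add_one_le_exp ((z - 3) / 4)]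
  calc (1 + z) ^ 2 ≤ (4 * exp ((z - 3) / 4)) ^ 2 := pow_le_pow_left₀ (by linarith) htangent 2
    _ = 16 * exp ((z - 3) / 2) := by rw [mul_pow, ← exp_nat_mul]; ring_nf

lemma exp_mul_one_add_sq_le {z δ : ℝ} (hz : -1 ≤ z) (hδ : δ ≤ 1 / 4) :
    3 * exp ((1 - (z - δ)) / 2) * (1 + z) ^ 2 ≤ 22 := by
  have hexp : 1 + 7 / 8 + (7 / 8) ^ 2 / 2 ≤ exp (7 / 8) :=
    quadratic_le_exp_of_nonneg (by norm_num)
  calc 3 * exp ((1 - (z - δ)) / 2) * (1 + z) ^ 2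
      ≤ 3 * exp ((1 - (z - 1 / 4)) / 2) * (16 * exp ((z - 3) / 2)) := by
        gcongr; exact one_add_sq_le_exp hz
    _ = 48 * (exp (7 / 8))⁻¹ := by
        rw [mul_mul_mul_comm, ← exp_add, ← exp_neg]; ring_nf
    _ ≤ 22 := by rw [← div_eq_mul_inv, div_le_iff₀ (exp_pos _)]; linarith

lemma measureReal_sum_truncAbove_eq_le [Fintype ι] (hindep : iIndepFun X μ)
    (hL2 : ∀ i, MemLp (X i) 2 μ) (hmean : ∀ i, ∫ ω, X i ω ∂μ = 0)
    (hvar : ∑ i, ∫ ω, X i ω ^ 2 ∂μ = 1) {z : ℝ} (hz : -1 < z)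
    (hβ : ∑ i, ∫ ω, X i ω ^ 2 * min 1 |X i ω| ∂μ ≤ 1 / 2) :
    μ.real {ω | ∑ i, truncAbove 1 (X i ω) = z} ≤
      22 * ((1 + z) ^ 2)⁻¹ * ∑ i, ∫ ω, X i ω ^ 2 * min 1 |X i ω| ∂μ := by
  have hpos := sum_integral_sq_mul_min_pos hL2 one_pos (hvar ▸ one_pos)
  set β := ∑ i, ∫ ω, X i ω ^ 2 * min 1 |X i ω| ∂μ
  have hconc := sub_mul_measureReal_sum_truncAbove_mem_Icc_le hindep hL2 hmean (le_refl z)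
    (half_pos hpos) (show 4 * (β / 2) ≤ 1 by linarith)
  have htail := measureReal_sum_truncAbove_ge_le hindep hL2 hmean zero_le_one zero_le_one
    (one_mul 1).le (z - β / 2)
  have hhalf : 1 - (4 * (β / 2))⁻¹ * β = 1 / 2 := by field_simp; norm_num
  simp only [Set.Icc_self, Set.mem_singleton_iff, hvar, sqrt_one, sub_self, zero_add, one_mul,
    one_pow] at hconc htail
  rw [hhalf] at hconc
  have hsqrt := (sqrt_le_sqrt htail).trans_eq (exp_half _).symm
  rw [mul_right_comm, ← div_eq_mul_inv, le_div_iff₀ (pow_pos (by linarith) 2)]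
  calc μ.real {ω | ∑ i, truncAbove 1 (X i ω) = z} * (1 + z) ^ 2
      ≤ β * (3 * exp ((1 - (z - β / 2)) / 2)) * (1 + z) ^ 2 := by
        gcongr
        linarith [mul_le_mul_of_nonneg_left hsqrt (show 0 ≤ 3 * (β / 2) by positivity)]
    _ ≤ 22 * β := by
        rw [mul_assoc, mul_comm 22]
        gcongr
        exact exp_mul_one_add_sq_le hz.le (by linarith)

lemma measureReal_gt_one_le [IsFiniteMeasure μ] {Y : Ω → ℝ} (hY : MemLp Y 2 μ) :
    μ.real {ω | 1 < Y ω} ≤ ∫ ω, Y ω ^ 2 * min 1 |Y ω| ∂μ := by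
  have hmarkov := mul_meas_ge_le_integral_of_nonneg (μ := μ)
    (Filter.Eventually.of_forall fun ω =>
      mul_nonneg (sq_nonneg (Y ω)) (le_min zero_le_one (abs_nonneg (Y ω))))
    (integrable_sq_mul_min hY zero_le_one) 1
  rw [one_mul] at hmarkov
  refine (measureReal_mono fun ω (hω : 1 < Y ω) => ?_).trans hmarkov
  rw [Set.mem_ofPred_eq, min_eq_left (hω.le.trans (le_abs_self _)), mul_one]
  exact one_le_pow₀ hω.le

lemma measureReal_gt_one_and_le_sum_le (hindep : iIndepFun X μ)
    (hL2 : ∀ i, MemLp (X i) 2 μ) (hmean : ∀ i, ∫ ω, X i ω ∂μ = 0) {s : Finset ι} {i : ι}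
    (hi : i ∉ s) {v t : ℝ} (hvar : ∑ j ∈ s, ∫ ω, X j ω ^ 2 ∂μ ≤ v) (hv : 0 < v) (ht : 0 ≤ t) :
    μ.real {ω | 1 < X i ω ∧ t ≤ ∑ j ∈ s, X j ω} ≤
      (∫ ω, X i ω ^ 2 * min 1 |X i ω| ∂μ) * (v / (v + t ^ 2)) := by
  have := hindep.isProbabilityMeasure
  have hind := indepFun_sum_comp_of_notMem hindep (fun j => (hL2 j).aemeasurable) measurable_id hi
  have hprod : μ.real {ω | 1 < X i ω ∧ t ≤ ∑ j ∈ s, X j ω} =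
      μ.real {ω | 1 < X i ω} * μ.real {ω | t ≤ ∑ j ∈ s, X j ω} := by
    rw [measureReal_def, measureReal_def, measureReal_def, ← ENNReal.toReal_mul]
    exact congrArg ENNReal.toReal
      (hind.measure_inter_preimage_eq_mul _ _ measurableSet_Ioi measurableSet_Ici)
  rw [hprod]
  gcongr
  · exact measureReal_gt_one_le (hL2 i)
  · exact measureReal_sum_ge_le_div_add_sq hindep hL2 hmean hvar hv ht

lemma measureReal_sum_ge_sdiff_sum_truncAbove_gt_le [Fintype ι] [DecidableEq ι]
    [IsFiniteMeasure μ] (c z r : ℝ) :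
    μ.real ({ω | z ≤ ∑ i, X i ω} \ {ω | z < ∑ i, truncAbove c (X i ω)}) ≤
      μ.real {ω | ∑ i, truncAbove c (X i ω) = z} +
        ∑ i, (μ.real {ω | r < |X i ω|} +
          μ.real {ω | c < X i ω ∧ z - r ≤ ∑ j ∈ Finset.univ.erase i, X j ω}) := by
  have hsub : {ω | z ≤ ∑ i, X i ω} \ {ω | z < ∑ i, truncAbove c (X i ω)} ⊆
      {ω | ∑ i, truncAbove c (X i ω) = z} ∪ ⋃ i, ({ω | r < |X i ω|} ∪
        {ω | c < X i ω ∧ z - r ≤ ∑ j ∈ Finset.univ.erase i, X j ω}) := fun ω hω => by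
    simpa only [Set.mem_union, Set.mem_iUnion, Set.mem_ofPred_eq] using
      sum_truncAbove_eq_or_exists hω.1 (not_lt.1 hω.2) r
  refine (measureReal_mono hsub).trans ((measureReal_union_le _ _).trans ?_)
  gcongr
  exact (measureReal_iUnion_fintype_le _).trans
    (Finset.sum_le_sum fun i _ => measureReal_union_le _ _)

lemma abs_measureReal_sum_ge_sub_le [Fintype ι] [IsFiniteMeasure μ] {c : ℝ} (hc : 0 ≤ c) (z : ℝ) :
    |μ.real {ω | z ≤ ∑ i, X i ω} - μ.real {ω | z < ∑ i, truncAbove c (X i ω)}| ≤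
      μ.real ({ω | z ≤ ∑ i, X i ω} \ {ω | z < ∑ i, truncAbove c (X i ω)}) := by
  have hsub : {ω | z < ∑ i, truncAbove c (X i ω)} ⊆ {ω | z ≤ ∑ i, X i ω} :=
    fun ω (hω : z < _) => hω.le.trans (Finset.sum_le_sum fun i _ => truncAbove_le_self hc (X i ω))
  rw [abs_of_nonneg (sub_nonneg.2 (measureReal_mono hsub))]
  exact le_measureReal_sdiff

lemma one_div_one_add_sq_le {κ z : ℝ} (hκ : 0 < κ) (hz : 0 ≤ z) :
    1 / (1 + (κ * z) ^ 2) ≤ (1 + κ⁻¹ ^ 2) * ((1 + z) ^ 2)⁻¹ := by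
  rw [← div_eq_mul_inv, div_le_div_iff₀ (by positivity) (by positivity), one_mul]
  have hsquare : (1 + κ⁻¹ ^ 2) * (1 + (κ * z) ^ 2) - (1 + z) ^ 2 = (κ * z - κ⁻¹) ^ 2 := by
    field_simp; ring
  linarith [sq_nonneg (κ * z - κ⁻¹)]

lemma measureReal_sum_ge_sdiff_le_of_le_half [Fintype ι] (hindep : iIndepFun X μ)
    (hL2 : ∀ i, MemLp (X i) 2 μ) (hmean : ∀ i, ∫ ω, X i ω ∂μ = 0)
    (hvar : ∑ i, ∫ ω, X i ω ^ 2 ∂μ = 1) {z : ℝ} (hz : 0 ≤ z)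
    (hβ : ∑ i, ∫ ω, X i ω ^ 2 * min 1 |X i ω| ∂μ ≤ 1 / 2) :
    μ.real ({ω | z ≤ ∑ i, X i ω} \ {ω | z < ∑ i, truncAbove 1 (X i ω)}) ≤
      ∑ i, μ.real {ω | z / 4 < |X i ω|} +
        25 * ((1 + z) ^ 2)⁻¹ * ∑ i, ∫ ω, X i ω ^ 2 * min 1 |X i ω| ∂μ := by
  classical
  have := hindep.isProbabilityMeasure
  have hjump : ∀ i, μ.real {ω | 1 < X i ω ∧ z - z / 4 ≤ ∑ j ∈ Finset.univ.erase i, X j ω} ≤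
      3 * ((1 + z) ^ 2)⁻¹ * ∫ ω, X i ω ^ 2 * min 1 |X i ω| ∂μ := fun i => by
    have hvar_erase : ∑ j ∈ Finset.univ.erase i, ∫ ω, X j ω ^ 2 ∂μ ≤ 1 :=
      (Finset.sum_le_sum_of_subset_of_nonneg (Finset.erase_subset i _)
        fun j _ _ => integral_nonneg fun ω => sq_nonneg _).trans_eq hvar
    refine (measureReal_gt_one_and_le_sum_le hindep hL2 hmean (Finset.notMem_erase i _) hvar_erase
      one_pos (by linarith)).trans ?_
    rw [mul_comm]
    gcongr
    rw [show z - z / 4 = 3 / 4 * z by ring]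
    refine (one_div_one_add_sq_le (by norm_num) hz).trans ?_
    gcongr
    norm_num
  have hatom :=
    measureReal_sum_truncAbove_eq_le hindep hL2 hmean hvar (neg_one_lt_zero.trans_le hz) hβ
  have hjumps := Finset.sum_le_sum fun i (_ : i ∈ Finset.univ) => hjump i
  rw [← Finset.mul_sum] at hjumps
  refine (measureReal_sum_ge_sdiff_sum_truncAbove_gt_le 1 z (z / 4)).trans ?_
  rw [Finset.sum_add_distrib]
  linarith

lemma measureReal_sum_ge_sdiff_le [Fintype ι] (hindep : iIndepFun X μ)
    (hL2 : ∀ i, MemLp (X i) 2 μ) (hmean : ∀ i, ∫ ω, X i ω ∂μ = 0)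
    (hvar : ∑ i, ∫ ω, X i ω ^ 2 ∂μ = 1) {z : ℝ} (hz : 0 ≤ z) :
    μ.real ({ω | z ≤ ∑ i, X i ω} \ {ω | z < ∑ i, truncAbove 1 (X i ω)}) ≤
      ∑ i, μ.real {ω | z / 4 < |X i ω|} +
        25 * ((1 + z) ^ 2)⁻¹ * ∑ i, ∫ ω, X i ω ^ 2 * min 1 |X i ω| ∂μ := by
  have := hindep.isProbabilityMeasure
  rcases le_or_gt (∑ i, ∫ ω, X i ω ^ 2 * min 1 |X i ω| ∂μ) (1 / 2) with hβ | hβ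
  · exact measureReal_sum_ge_sdiff_le_of_le_half hindep hL2 hmean hvar hz hβ
  · have hnum := one_div_one_add_sq_le one_pos hz
    rw [one_mul, inv_one, one_pow, one_add_one_eq_two] at hnum
    calc μ.real ({ω | z ≤ ∑ i, X i ω} \ {ω | z < ∑ i, truncAbove 1 (X i ω)})
        ≤ μ.real {ω | z ≤ ∑ i, X i ω} := measureReal_mono Set.sdiff_subset
      _ ≤ 1 / (1 + z ^ 2) :=
        measureReal_sum_ge_le_div_add_sq hindep hL2 hmean hvar.le one_pos hz
      _ ≤ 2 * ((1 + z) ^ 2)⁻¹ := hnum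
      _ ≤ 25 * ((1 + z) ^ 2)⁻¹ * ∑ i, ∫ ω, X i ω ^ 2 * min 1 |X i ω| ∂μ := by
        nlinarith [show 0 ≤ ((1 + z) ^ 2)⁻¹ by positivity]
      _ ≤ _ := le_add_of_nonneg_left (Finset.sum_nonneg fun i _ => measureReal_nonneg)

theorem truncation_probability_bound_general [Fintype ι] (hindep : iIndepFun X μ)
    (hL2 : ∀ i, MemLp (X i) 2 μ) (hmean : ∀ i, ∫ ω, X i ω ∂μ = 0)
    (hvar : ∑ i, ∫ ω, X i ω ^ 2 ∂μ = 1) {z : ℝ} (hz : 0 ≤ z) :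
    |μ.real {ω | z ≤ ∑ i, X i ω} - μ.real {ω | z < ∑ i, truncAbove 1 (X i ω)}| ≤
      ∑ i, μ.real {ω | z / 4 < |X i ω|} +
        25 * ((1 + z) ^ 2)⁻¹ * ∑ i, ∫ ω, X i ω ^ 2 * min 1 |X i ω| ∂μ := by
  have := hindep.isProbabilityMeasure
  exact (abs_measureReal_sum_ge_sub_le zero_le_one z).trans
    (measureReal_sum_ge_sdiff_le hindep hL2 hmean hvar hz)

end Probability

lemma ite_sq_add_ite_cube (x : ℝ) :
    (if 1 < |x| then x ^ 2 else 0) + (if |x| ≤ 1 then |x| ^ 3 else 0) = x ^ 2 * min 1 |x| := by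
  rcases le_or_gt |x| 1 with h | h
  · rw [if_neg h.not_gt, if_pos h, min_eq_right h, zero_add, pow_succ, sq_abs]
  · rw [if_pos h, if_neg h.not_ge, min_eq_left h.le, add_zero, mul_one]

lemma beta2_add_beta3 {Ω : Type*} [MeasureSpace Ω] {n : ℕ} {ξ : Fin n → Ω → ℝ}
    (hL2 : ∀ i, MemLp (ξ i) 2 ℙ) :
    beta2 ξ + beta3 ξ = ∑ i, ∫ ω, ξ i ω ^ 2 * min 1 |ξ i ω| := by
  rw [beta2, beta3, ← Finset.sum_add_distrib]
  refine Finset.sum_congr rfl fun i _ => ?_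
  rw [← integral_add]
  · simp only [ite_sq_add_ite_cube]
  · refine integrable_comp_of_abs_le_mul_sq (C := 1) (φ := fun x => if 1 < |x| then x ^ 2 else 0)
      (hL2 i) (Measurable.ite (measurableSet_lt (by fun_prop) (by fun_prop)) (by fun_prop)
        (by fun_prop)) fun x => ?_
    split_ifs <;> simp [sq_nonneg]
  · refine integrable_comp_of_abs_le_mul_sq (C := 1)
      (φ := fun x => if |x| ≤ 1 then |x| ^ 3 else 0) (hL2 i)
      (Measurable.ite (measurableSet_le (by fun_prop) (by fun_prop)) (by fun_prop)
        (by fun_prop)) fun x => ?_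
    split_ifs with h
    · rw [abs_pow, abs_abs, one_mul, ← sq_abs x]
      exact pow_le_pow_of_le_one (abs_nonneg x) h (by norm_num)
    · simp [sq_nonneg]

lemma twentyFive_le_four_mul_exp_one_sq : 25 ≤ 4 * exp 1 ^ 2 := by
  nlinarith [exp_one_gt_d9]

/-- Closeness of P(W >= z) and P(Wbar > z) for z > 2. -/
theorem truncation_probability_bound
    {Ω : Type*} [MeasureSpace Ω] [IsProbabilityMeasure (ℙ : Measure Ω)]
    {n : ℕ} (ξ : Fin n → Ω → ℝ)
    (hmeas : ∀ i, Measurable (ξ i))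
    (hindep : iIndepFun ξ ℙ)
    (hL2 : ∀ i, MemLp (ξ i) 2 ℙ)
    (hmean : ∀ i, ∫ ω, ξ i ω = 0)
    (hvar : ∑ i, ∫ ω, (ξ i ω) ^ 2 = 1)
    (z : ℝ) (hz : 2 < z) :
    |(ℙ {ω | z ≤ ∑ i, ξ i ω}).toReal - (ℙ {ω | z < Wbar ξ ω}).toReal|
      ≤ 2 * ∑ i, (ℙ {ω | z / 4 < |ξ i ω|}).toReal
        + 4 * Real.exp 1 ^ 2 * ((1 + z) ^ 2)⁻¹ * (beta2 ξ + beta3 ξ) := by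
  rw [beta2_add_beta3 hL2]
  refine (truncation_probability_bound_general hindep hL2 hmean hvar (by linarith)).trans ?_
  exact add_le_add (le_mul_of_one_le_left (by positivity) one_le_two)
    (by gcongr; exact twentyFive_le_four_mul_exp_one_sq)
end

section
/- For every z ≥ 0, P(W ≥ z) ≤ Σᵢ₌₁ⁿ P(|ξᵢ| > (z ∨ 1)/4) + e² (1 + z²/2)^{−2}. -/
open MeasureTheory ProbabilityTheory Real

/-!
Truncate each summand from above at a level `a`. Since `y ↦ (exp y - 1 - y) / y ^ 2` is increasing,
the truncated summand `min (ξ i) a` satisfies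
`E[exp (t * min (ξ i) a)] ≤ exp ((exp (t * a) - 1 - t * a) / a ^ 2 * E[ξ i ^ 2])`, with no moment
beyond the second. Chernoff's bound with `t = log (1 + a * z / v) / a`, where `v` is the total
variance, gives the Fuk–Nagaev inequality with exponential term
`exp (z / a) * (1 + a * z / v) ^ (-(z / a))`; the level `a = z / 2` makes the exponent equal to `2`.
For `z < 1` that term exceeds `1`.
-/

lemma sq_mul_integral_one_sub_mul_exp (y : ℝ) :
    y ^ 2 * ∫ s in (0 : ℝ)..1, (1 - s) * exp (s * y) = exp y - 1 - y := by
  have hderiv (s : ℝ) : HasDerivAt (fun s ↦ (y * (1 - s) + 1) * exp (s * y))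
      (y ^ 2 * ((1 - s) * exp (s * y))) s := by
    have hlin : HasDerivAt (fun s ↦ y * (1 - s) + 1) (y * -1) s :=
      (((hasDerivAt_id s).const_sub 1).const_mul y).add_const 1
    have hexp : HasDerivAt (fun s ↦ exp (s * y)) (exp (s * y) * y) s :=
      (hasDerivAt_mul_const y).exp
    exact (hlin.mul hexp).congr_deriv (by ring)
  rw [← intervalIntegral.integral_const_mul,
    intervalIntegral.integral_eq_sub_of_hasDerivAt (fun s _ ↦ hderiv s)
      (Continuous.intervalIntegrable (by fun_prop) 0 1)]
  simp only [sub_self, mul_zero, zero_add, one_mul, sub_zero, mul_one, zero_mul, exp_zero]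
  ring

lemma sq_mul_exp_sub_one_sub_le {y b : ℝ} (hyb : y ≤ b) :
    b ^ 2 * (exp y - 1 - y) ≤ y ^ 2 * (exp b - 1 - b) := by
  have hint (c : ℝ) : IntervalIntegrable (fun s ↦ (1 - s) * exp (s * c)) volume 0 1 :=
    Continuous.intervalIntegrable (by fun_prop) 0 1
  have hmono : ∫ s in (0 : ℝ)..1, (1 - s) * exp (s * y) ≤
      ∫ s in (0 : ℝ)..1, (1 - s) * exp (s * b) := by
    refine intervalIntegral.integral_mono_on zero_le_one (hint y) (hint b) fun s hs ↦ ?_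
    have : 0 ≤ 1 - s := sub_nonneg.2 hs.2
    have : 0 ≤ s := hs.1
    gcongr
  rw [← sq_mul_integral_one_sub_mul_exp y, ← sq_mul_integral_one_sub_mul_exp b, mul_left_comm]
  gcongr

lemma exp_mul_le_quadratic {t x a : ℝ} (ha : 0 < a) (ht : 0 ≤ t) (hxa : x ≤ a) :
    exp (t * x) ≤ 1 + t * x + (exp (t * a) - 1 - t * a) / a ^ 2 * x ^ 2 := by
  obtain rfl | ht := ht.eq_or_lt
  · simp
  have hquad := sq_mul_exp_sub_one_sub_le (mul_le_mul_of_nonneg_left hxa ht.le)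
  have hdiv : exp (t * x) - 1 - t * x ≤ (t * x) ^ 2 * (exp (t * a) - 1 - t * a) / (t * a) ^ 2 := by
    rwa [le_div_iff₀' (by positivity)]
  calc exp (t * x) = 1 + t * x + (exp (t * x) - 1 - t * x) := by ring
    _ ≤ 1 + t * x + (t * x) ^ 2 * (exp (t * a) - 1 - t * a) / (t * a) ^ 2 := by gcongr
    _ = 1 + t * x + (exp (t * a) - 1 - t * a) / a ^ 2 * x ^ 2 := by field_simp

lemma exp_sub_one_sub_div_sq_nonneg (b a : ℝ) : 0 ≤ (exp b - 1 - b) / a ^ 2 :=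
  div_nonneg (by linarith [add_one_le_exp b]) (sq_nonneg a)

lemma exp_mul_min_le_quadratic {t a : ℝ} (ha : 0 < a) (ht : 0 ≤ t) (x : ℝ) :
    exp (t * min x a) ≤ 1 + t * x + (exp (t * a) - 1 - t * a) / a ^ 2 * x ^ 2 := by
  have hsq : min x a ^ 2 ≤ x ^ 2 := by
    rcases le_total x a with hxa | hax
    · rw [min_eq_left hxa]
    · rw [min_eq_right hax]
      gcongr
  have := exp_sub_one_sub_div_sq_nonneg (t * a) a
  calc exp (t * min x a)
      ≤ 1 + t * min x a + (exp (t * a) - 1 - t * a) / a ^ 2 * min x a ^ 2 :=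
        exp_mul_le_quadratic ha ht (min_le_right x a)
    _ ≤ 1 + t * x + (exp (t * a) - 1 - t * a) / a ^ 2 * x ^ 2 := by
        gcongr
        exact min_le_left x a

section

variable {ι Ω : Type*} {_ : MeasurableSpace Ω} {μ : Measure Ω}

lemma mgf_min_le [IsProbabilityMeasure μ] {X : Ω → ℝ} (hX : MemLp X 2 μ) (hmean : ∫ ω, X ω ∂μ ≤ 0)
    {t a : ℝ} (ha : 0 < a) (ht : 0 ≤ t) :
    mgf (fun ω ↦ min (X ω) a) μ t ≤
      exp ((exp (t * a) - 1 - t * a) / a ^ 2 * ∫ ω, X ω ^ 2 ∂μ) := by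
  set K := (exp (t * a) - 1 - t * a) / a ^ 2
  have hlin : Integrable (fun ω ↦ 1 + t * X ω) μ :=
    (integrable_const 1).add ((hX.integrable one_le_two).const_mul t)
  have hsq : Integrable (fun ω ↦ K * X ω ^ 2) μ := hX.integrable_sq.const_mul K
  calc mgf (fun ω ↦ min (X ω) a) μ t
      ≤ ∫ ω, (1 + t * X ω + K * X ω ^ 2) ∂μ :=
        integral_mono_of_nonneg (.of_forall fun _ ↦ (exp_pos _).le) (hlin.add hsq)
          (.of_forall fun ω ↦ exp_mul_min_le_quadratic ha ht (X ω))
    _ = 1 + t * ∫ ω, X ω ∂μ + K * ∫ ω, X ω ^ 2 ∂μ := by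
        rw [integral_add hlin hsq, integral_add (integrable_const 1)
          ((hX.integrable one_le_two).const_mul t), integral_const_mul, integral_const_mul,
          integral_const, probReal_univ, one_smul]
    _ ≤ K * ∫ ω, X ω ^ 2 ∂μ + 1 := by linarith [mul_nonpos_of_nonneg_of_nonpos ht hmean]
    _ ≤ exp (K * ∫ ω, X ω ^ 2 ∂μ) := add_one_le_exp _

variable [Fintype ι] {ξ : ι → Ω → ℝ}

lemma mgf_sum_min_le (hindep : iIndepFun ξ μ) (hL2 : ∀ i, MemLp (ξ i) 2 μ)
    (hmean : ∀ i, ∫ ω, ξ i ω ∂μ ≤ 0) {v : ℝ} (hvar : ∑ i, ∫ ω, ξ i ω ^ 2 ∂μ ≤ v)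
    {t a : ℝ} (ha : 0 < a) (ht : 0 ≤ t) :
    mgf (∑ i, fun ω ↦ min (ξ i ω) a) μ t ≤ exp ((exp (t * a) - 1 - t * a) / a ^ 2 * v) := by
  have := hindep.isProbabilityMeasure
  have hindep_min : iIndepFun (fun i ω ↦ min (ξ i ω) a) μ :=
    hindep.comp (fun _ x ↦ min x a) fun _ ↦ measurable_id.min measurable_const
  have hmeas (i : ι) : AEMeasurable (fun ω ↦ min (ξ i ω) a) μ :=
    (hL2 i).aemeasurable.min aemeasurable_const
  have := exp_sub_one_sub_div_sq_nonneg (t * a) a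
  set K := (exp (t * a) - 1 - t * a) / a ^ 2
  calc mgf (∑ i, fun ω ↦ min (ξ i ω) a) μ t
      = ∏ i, mgf (fun ω ↦ min (ξ i ω) a) μ t := hindep_min.mgf_sum₀ hmeas Finset.univ
    _ ≤ ∏ i, exp (K * ∫ ω, ξ i ω ^ 2 ∂μ) :=
        Finset.prod_le_prod (fun _ _ ↦ mgf_nonneg) fun i _ ↦ mgf_min_le (hL2 i) (hmean i) ha ht
    _ = exp (K * ∑ i, ∫ ω, ξ i ω ^ 2 ∂μ) := by rw [← exp_sum, Finset.mul_sum]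
    _ ≤ exp (K * v) := by gcongr

lemma integrable_exp_mul_sum_min [IsFiniteMeasure μ] (hmeas : ∀ i, AEMeasurable (ξ i) μ)
    {t : ℝ} (ht : 0 ≤ t) (a : ℝ) :
    Integrable (fun ω ↦ exp (t * (∑ i, fun ω ↦ min (ξ i ω) a) ω)) μ := by
  refine integrable_exp_mul_of_le t (∑ _ : ι, a) ht
    (Finset.aemeasurable_sum _ fun i _ ↦ (hmeas i).min aemeasurable_const) (.of_forall fun ω ↦ ?_)
  rw [Finset.sum_apply]
  exact Finset.sum_le_sum fun i _ ↦ min_le_right (ξ i ω) a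

lemma measureReal_sum_ge_le_add_sum_min [IsFiniteMeasure μ] (ξ : ι → Ω → ℝ) (z a : ℝ) :
    μ.real {ω | z ≤ ∑ i, ξ i ω} ≤
      ∑ i, μ.real {ω | a < ξ i ω} + μ.real {ω | z ≤ (∑ i, fun ω ↦ min (ξ i ω) a) ω} := by
  have hsubset : {ω | z ≤ ∑ i, ξ i ω} ⊆
      (⋃ i, {ω | a < ξ i ω}) ∪ {ω | z ≤ (∑ i, fun ω ↦ min (ξ i ω) a) ω} := by
    intro ω hω
    by_cases hlarge : ∃ i, a < ξ i ω
    · exact .inl (Set.mem_iUnion.2 hlarge)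
    · have hmin (i : ι) : min (ξ i ω) a = ξ i ω := min_eq_left (not_lt.1 fun h ↦ hlarge ⟨i, h⟩)
      right
      simpa only [Set.mem_ofPred_eq, Finset.sum_apply, hmin] using hω
  calc μ.real {ω | z ≤ ∑ i, ξ i ω}
      ≤ μ.real (⋃ i, {ω | a < ξ i ω}) + μ.real {ω | z ≤ (∑ i, fun ω ↦ min (ξ i ω) a) ω} :=
        (measureReal_mono hsubset).trans (measureReal_union_le _ _)
    _ ≤ _ := by
        gcongr
        exact measureReal_iUnion_fintype_le _

theorem measureReal_sum_ge_le_add_exp (hindep : iIndepFun ξ μ) (hL2 : ∀ i, MemLp (ξ i) 2 μ)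
    (hmean : ∀ i, ∫ ω, ξ i ω ∂μ ≤ 0) {v : ℝ} (hvar : ∑ i, ∫ ω, ξ i ω ^ 2 ∂μ ≤ v)
    {t a : ℝ} (ha : 0 < a) (ht : 0 ≤ t) (z : ℝ) :
    μ.real {ω | z ≤ ∑ i, ξ i ω} ≤
      ∑ i, μ.real {ω | a < ξ i ω} + exp (-t * z + (exp (t * a) - 1 - t * a) / a ^ 2 * v) := by
  have := hindep.isProbabilityMeasure
  calc μ.real {ω | z ≤ ∑ i, ξ i ω}
      ≤ ∑ i, μ.real {ω | a < ξ i ω} + μ.real {ω | z ≤ (∑ i, fun ω ↦ min (ξ i ω) a) ω} :=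
        measureReal_sum_ge_le_add_sum_min ξ z a
    _ ≤ ∑ i, μ.real {ω | a < ξ i ω} +
          exp (-t * z) * mgf (∑ i, fun ω ↦ min (ξ i ω) a) μ t := by
        gcongr
        exact measure_ge_le_exp_mul_mgf z ht
          (integrable_exp_mul_sum_min (fun i ↦ (hL2 i).aemeasurable) ht a)
    _ ≤ _ := by
        rw [exp_add]
        gcongr
        exact mgf_sum_min_le hindep hL2 hmean hvar ha ht

theorem measureReal_sum_ge_le_add_rpow (hindep : iIndepFun ξ μ) (hL2 : ∀ i, MemLp (ξ i) 2 μ)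
    (hmean : ∀ i, ∫ ω, ξ i ω ∂μ ≤ 0) {v : ℝ} (hv : 0 < v)
    (hvar : ∑ i, ∫ ω, ξ i ω ^ 2 ∂μ ≤ v) {z a : ℝ} (ha : 0 < a) (hz : 0 ≤ z) :
    μ.real {ω | z ≤ ∑ i, ξ i ω} ≤
      ∑ i, μ.real {ω | a < ξ i ω} + exp (z / a) * (1 + a * z / v) ^ (-(z / a)) := by
  have hbase : 1 ≤ 1 + a * z / v := le_add_of_nonneg_right (by positivity)
  set L := log (1 + a * z / v) with hL
  have hL_nonneg : 0 ≤ L := log_nonneg hbase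
  have ht : 0 ≤ L / a := div_nonneg hL_nonneg ha.le
  have hexp_L : exp L = 1 + a * z / v := exp_log (by linarith)
  refine (measureReal_sum_ge_le_add_exp hindep hL2 hmean hvar ha ht z).trans ?_
  rw [rpow_def_of_pos (by linarith), ← exp_add, ← hL, div_mul_cancel₀ L ha.ne', hexp_L]
  refine add_le_add_right (exp_le_exp.2 ?_) _
  calc -(L / a) * z + (1 + a * z / v - 1 - L) / a ^ 2 * v
      = z / a + L * -(z / a) - L * v / a ^ 2 := by
        field_simp
        ring
    _ ≤ z / a + L * -(z / a) := sub_le_self _ (by positivity)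

theorem W_tail_bound_general (hindep : iIndepFun ξ μ) (hL2 : ∀ i, MemLp (ξ i) 2 μ)
    (hmean : ∀ i, ∫ ω, ξ i ω ∂μ ≤ 0) (hvar : ∑ i, ∫ ω, ξ i ω ^ 2 ∂μ ≤ 1) {z : ℝ} (hz : 0 ≤ z) :
    μ.real {ω | z ≤ ∑ i, ξ i ω} ≤
      ∑ i, μ.real {ω | max z 1 / 2 < ξ i ω} + exp 1 ^ 2 * ((1 + z ^ 2 / 2) ^ 2)⁻¹ := by
  have := hindep.isProbabilityMeasure
  rcases lt_or_ge z 1 with hz1 | hz1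
  · have hbase : 1 + z ^ 2 / 2 ≤ exp 1 := by nlinarith [add_one_le_exp 1]
    calc μ.real {ω | z ≤ ∑ i, ξ i ω} ≤ 1 := measureReal_le_one
      _ ≤ exp 1 ^ 2 * ((1 + z ^ 2 / 2) ^ 2)⁻¹ := by
          rw [← div_eq_mul_inv, one_le_div (by positivity)]
          gcongr
      _ ≤ _ := le_add_of_nonneg_left (Finset.sum_nonneg fun _ _ ↦ measureReal_nonneg)
  · have hz0 : 0 < z := by linarith
    have hexponent : z / (z / 2) = 2 := by field_simp
    have hbase : 1 + z / 2 * z / 1 = 1 + z ^ 2 / 2 := by ring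
    have hbound := measureReal_sum_ge_le_add_rpow hindep hL2 hmean one_pos hvar (half_pos hz0) hz
    rw [max_eq_left hz1]
    rwa [hexponent, hbase, rpow_neg (by positivity), rpow_two, ← exp_one_rpow 2, rpow_two]
      at hbound

end

/-- Tail bound (4.15) for P(W >= z). -/
theorem W_tail_bound
    {Ω : Type*} [MeasureSpace Ω] [IsProbabilityMeasure (ℙ : Measure Ω)]
    {n : ℕ} (ξ : Fin n → Ω → ℝ)
    (hmeas : ∀ i, Measurable (ξ i))
    (hindep : iIndepFun ξ ℙ)
    (hL2 : ∀ i, MemLp (ξ i) 2 ℙ)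
    (hmean : ∀ i, ∫ ω, ξ i ω = 0)
    (hvar : ∑ i, ∫ ω, (ξ i ω) ^ 2 = 1)
    (z : ℝ) (hz : 0 ≤ z) :
    (ℙ {ω | z ≤ ∑ i, ξ i ω}).toReal
      ≤ (∑ i, (ℙ {ω | max z 1 / 4 < |ξ i ω|}).toReal)
        + Real.exp 1 ^ 2 * ((1 + z ^ 2 / 2) ^ 2)⁻¹ := by
  refine (W_tail_bound_general hindep hL2 (fun i ↦ (hmean i).le) hvar.le hz).trans ?_
  have hthreshold : max z 1 / 4 ≤ max z 1 / 2 := by linarith [le_max_right z 1]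
  gcongr with i
  exact measureReal_mono fun ω hω ↦ (hthreshold.trans_lt hω).trans_le (le_abs_self (ξ i ω))
end
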